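/- Consider for n = 3 the spiral vertices V_i = (r p^i cos(i φ), r p^i sin(i φ), −r p^i q) with r > 0, 0 < p < 1, q ≠ 0, c = cos φ, s = sin φ. Let ε be a plane orthogonal to the z-axis intersecting segment V_3V_4, cutting the six segments V_3V_4, V_1V_4, V_4V_2, V_2V_5, V_5V_3, V_3V_6 in points E_1,…,E_6 (parametrized by α ∈ [0,1] on V_3V_4 with cut height h = −r p³ q (α p − α + 1)). Then the area A of the hexagon E_1…E_6 satisfies A/h² = s(c − 1)(2cp − p² − 1) / ((p² + p + 1) q²), independently of α. -/

import Mathlib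

open Real

/-- 2×2 determinant of two planar points. -/
def det2 (u v : ℝ × ℝ) : ℝ := u.1 * v.2 - u.2 * v.1

/-- The pairs of vertex indices whose connecting segments are cut by the
cross-sectional plane, in cyclic order (case n = 3). -/
def cutPairs : Fin 6 → ℕ × ℕ := ![(3, 4), (1, 4), (4, 2), (2, 5), (5, 3), (3, 6)]

lemma det2_polar (a b x y : ℝ) :
    det2 (a * cos x, a * sin x) (b * cos y, b * sin y) = a * b * sin (y - x) := by
  simp only [det2, sin_sub]
  ring

lemma sin_four_mul (x : ℝ) : sin (4 * x) = sin x * (8 * cos x ^ 3 - 4 * cos x) := by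
  rw [show 4 * x = 2 * (2 * x) by ring, sin_two_mul, sin_two_mul, cos_two_mul]
  ring

lemma sin_three_mul_eq (x : ℝ) : sin (3 * x) = sin x * (4 * cos x ^ 2 - 1) := by
  rw [sin_three_mul]
  linear_combination (-4 * sin x) * sin_sq_add_cos_sq x

lemma sin_five_mul (x : ℝ) :
    sin (5 * x) = sin x * (16 * cos x ^ 4 - 12 * cos x ^ 2 + 1) := by
  rw [show 5 * x = 3 * x + 2 * x by ring, sin_add, sin_three_mul_eq, cos_three_mul, sin_two_mul,
    cos_two_mul]
  ring

/-- Theorem 7 of the paper, case n = 3: the cross-sectional area divided by the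
squared cut height is independent of the cut position α. -/
theorem cross_section_area_ratio_n3
    (r p q φ α c s h : ℝ)
    (hr : 0 < r) (hp0 : 0 < p) (hp1 : p < 1) (hq : q ≠ 0)
    (hφ0 : 0 < φ) (hφπ : φ < Real.pi)
    (hc : c = Real.cos φ) (hs : s = Real.sin φ)
    (hα0 : 0 ≤ α) (hα1 : α ≤ 1)
    (hh : h = -(r * p ^ 3 * q) * (α * p - α + 1))
    (V : ℕ → ℝ × ℝ × ℝ)
    (hV : ∀ i : ℕ, V i =
      (r * p ^ i * Real.cos (i * φ), r * p ^ i * Real.sin (i * φ), -(r * p ^ i * q)))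
    (t : Fin 6 → ℝ)
    -- each intersection point lies in the plane z = h
    (htz : ∀ j : Fin 6,
      (1 - t j) * (V (cutPairs j).1).2.2 + t j * (V (cutPairs j).2).2.2 = h)
    -- the parameter on the segment V₃V₄ is α
    (ht0 : t 0 = α)
    (E : Fin 6 → ℝ × ℝ)
    (hE : ∀ j : Fin 6, E j =
      ((1 - t j) * (V (cutPairs j).1).1 + t j * (V (cutPairs j).2).1,
       (1 - t j) * (V (cutPairs j).1).2.1 + t j * (V (cutPairs j).2).2.1))
    (A : ℝ)
    (hA : A = 1 / 2 * |∑ j : Fin 6, det2 (E j) (E (j + 1))|) :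
    A / h ^ 2 = s * (c - 1) * (2 * c * p - p ^ 2 - 1) / ((p ^ 2 + p + 1) * q ^ 2) := by
  have hD : p ^ 2 + p + 1 ≠ 0 := by positivity
  have hp1' : 1 + p ≠ 0 := by positivity
  have hm : 1 - p ≠ 0 := by linarith
  have hβ : 0 < α * p - α + 1 := by nlinarith
  have hs0 : 0 < s := hs ▸ sin_pos_of_pos_of_lt_pi hφ0 hφπ
  have hh0 : h ≠ 0 := by
    rw [hh]
    exact mul_ne_zero (neg_ne_zero.mpr (by positivity)) hβ.ne'
  have ht1 : t 1 = (1 + p + α * p ^ 2) / (p ^ 2 + p + 1) := by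
    have hz := htz 1
    simp only [cutPairs, hV, hh, Matrix.cons_val] at hz
    rw [eq_div_iff hD]
    refine mul_left_cancel₀ (mul_ne_zero (show r * p ^ 1 * q ≠ 0 by positivity) hm) ?_
    linear_combination hz
  have ht2 : t 2 = p * (1 - α) / (1 + p) := by
    have hz := htz 2
    simp only [cutPairs, hV, hh, Matrix.cons_val] at hz
    rw [eq_div_iff hp1']
    refine mul_left_cancel₀ (mul_ne_zero (show r * p ^ 2 * q ≠ 0 by positivity) hm) ?_
    linear_combination -hz
  have ht3 : t 3 = (1 + α * p) / (p ^ 2 + p + 1) := by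
    have hz := htz 3
    simp only [cutPairs, hV, hh, Matrix.cons_val] at hz
    rw [eq_div_iff hD]
    refine mul_left_cancel₀ (mul_ne_zero (show r * p ^ 2 * q ≠ 0 by positivity) hm) ?_
    linear_combination hz
  have ht4 : t 4 = (1 + p - α) / (1 + p) := by
    have hz := htz 4
    simp only [cutPairs, hV, hh, Matrix.cons_val] at hz
    rw [eq_div_iff hp1']
    refine mul_left_cancel₀ (mul_ne_zero (show r * p ^ 3 * q ≠ 0 by positivity) hm) ?_
    linear_combination -hz
  have ht5 : t 5 = α / (p ^ 2 + p + 1) := by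
    have hz := htz 5
    simp only [cutPairs, hV, hh, Matrix.cons_val] at hz
    rw [eq_div_iff hD]
    refine mul_left_cancel₀ (mul_ne_zero (show r * p ^ 3 * q ≠ 0 by positivity) hm) ?_
    linear_combination hz
  have hsum : ∑ j : Fin 6, det2 (E j) (E (j + 1)) =
      2 * h ^ 2 * (s * (c - 1) * (2 * c * p - p ^ 2 - 1) / ((p ^ 2 + p + 1) * q ^ 2)) := by
    have hd : ∀ i j : ℕ, det2 ((V i).1, (V i).2.1) ((V j).1, (V j).2.1) =
        r ^ 2 * p ^ (i + j) * sin (((j : ℝ) - i) * φ) := by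
      intro i j
      simp only [hV, det2_polar, sub_mul]
      ring
    have hdet : ∀ j k : Fin 6, det2 (E j) (E k) =
        (1 - t j) * (1 - t k) * (r ^ 2 * p ^ ((cutPairs j).1 + (cutPairs k).1) *
          sin ((((cutPairs k).1 : ℝ) - (cutPairs j).1) * φ)) +
        (1 - t j) * t k * (r ^ 2 * p ^ ((cutPairs j).1 + (cutPairs k).2) *
          sin ((((cutPairs k).2 : ℝ) - (cutPairs j).1) * φ)) +
        t j * (1 - t k) * (r ^ 2 * p ^ ((cutPairs j).2 + (cutPairs k).1) *
          sin ((((cutPairs k).1 : ℝ) - (cutPairs j).2) * φ)) +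
        t j * t k * (r ^ 2 * p ^ ((cutPairs j).2 + (cutPairs k).2) *
          sin ((((cutPairs k).2 : ℝ) - (cutPairs j).2) * φ)) := fun j k => by
      rw [hE j, hE k, ← hd, ← hd, ← hd, ← hd]
      simp only [det2]
      ring
    simp only [Fin.sum_univ_six, hdet]
    simp only [Fin.reduceAdd, cutPairs, Matrix.cons_val, zero_add, ht0, ht1, ht2, ht3, ht4, ht5]
    norm_num [neg_mul, sin_neg, sin_two_mul, sin_three_mul_eq, sin_four_mul, sin_five_mul,
      ← hc, ← hs]
    rw [hh]
    field_simp
    ring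
  have hpos : 0 ≤ s * (c - 1) * (2 * c * p - p ^ 2 - 1) / ((p ^ 2 + p + 1) * q ^ 2) := by
    have hc1 : c ≤ 1 := hc ▸ cos_le_one φ
    refine div_nonneg (mul_nonneg_of_nonpos_of_nonpos ?_ ?_) (by positivity)
    · exact mul_nonpos_of_nonneg_of_nonpos hs0.le (by linarith)
    · nlinarith [sq_nonneg (p - 1)]
  rw [hA, hsum, abs_of_nonneg (by positivity)]
  field_simp
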